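/- Let n and d be positive integers and μ, σ, γ, ε > 0. Let (Z_{ij})_{i ∈ {1,…,n+1}, j ∈ {1,…,d}} be i.i.d. random variables each distributed as the Gaussian N(μ, σ²), i.e. the underlying measure is the product over (i,j) of the Gaussian measure N(μ, σ²) on ℝ. Define S_j = Σ_{i=1}^n Z_{ij} for j = 1,…,d, let θ ∈ ℝ^d have coordinates θ_j = γ·sign(S_j/n − ε·sign(S_j/n)), and let Z* = (Z_{(n+1)1}, …, Z_{(n+1)d}) be the test point. Then E[⟨θ, S/n⟩ − ⟨θ, Z*⟩] = d·γ·σ·√(2/(nπ))·(exp(−n(ε+μ)²/(2σ²)) + exp(−n(ε−μ)²/(2σ²)) − exp(−nμ²/(2σ²))). -/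

import Mathlib

open MeasureTheory ProbabilityTheory

lemma rlg_integrable (μ : ℝ) (v : NNReal) : Integrable (fun x : ℝ => x) (gaussianReal μ v) :=
  (memLp_id_gaussianReal (μ := μ) (v := v) 1).integrable (by simp)

lemma rlg_integrable_pdf (μ : ℝ) (v : NNReal) (hv : v ≠ 0) :
    Integrable (fun x : ℝ => gaussianPDFReal μ v x * (x - μ)) := by
  have h : Integrable (fun x : ℝ => x - μ) (gaussianReal μ v) :=
    (rlg_integrable μ v).sub (integrable_const μ)
  rw [gaussianReal_of_var_ne_zero _ hv,
    integrable_withDensity_iff_integrable_smul' (measurable_gaussianPDF _ _)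
      (ae_of_all _ fun _ ↦ gaussianPDF_lt_top)] at h
  simpa using h

lemma rlg_tail (μ : ℝ) (v : NNReal) (hv : v ≠ 0) (a : ℝ) :
    ∫ x, (Set.Ioi a).indicator (fun _ => (1 : ℝ)) x * (x - μ) ∂(gaussianReal μ v)
      = v * gaussianPDFReal μ v a := by
  have hv' : (v : ℝ) ≠ 0 := by exact_mod_cast hv
  have hvp : (0 : ℝ) < v := lt_of_le_of_ne v.2 (Ne.symm hv')
  rw [integral_gaussianReal_eq_integral_smul hv]
  have h1 : (fun x => gaussianPDFReal μ v x •
      ((Set.Ioi a).indicator (fun _ => (1 : ℝ)) x * (x - μ)))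
      = (Set.Ioi a).indicator (fun x => gaussianPDFReal μ v x * (x - μ)) := by
    ext x
    by_cases hx : x ∈ Set.Ioi a <;> simp [hx]
  rw [h1, integral_indicator measurableSet_Ioi]
  have h2 : ∀ x ∈ Set.Ici a, HasDerivAt (fun x => -(v : ℝ) * gaussianPDFReal μ v x)
      (gaussianPDFReal μ v x * (x - μ)) x := by
    intro x _
    simp only [gaussianPDFReal_def]
    have h3 : HasDerivAt (fun x : ℝ => -(x - μ) ^ 2 / (2 * (v : ℝ)))
        (-(2 * (x - μ)) / (2 * v)) x := by
      have := (((hasDerivAt_id x).sub_const μ).pow 2).neg.div_const (2 * (v : ℝ))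
      exact this.congr_deriv (by simp)
    have h4 := (h3.exp.const_mul ((√(2 * Real.pi * v))⁻¹)).const_mul (-(v : ℝ))
    exact h4.congr_deriv (by field_simp)
  have h5 : Filter.Tendsto (fun x => -(v : ℝ) * gaussianPDFReal μ v x) Filter.atTop
      (nhds (-(v : ℝ) * ((√(2 * Real.pi * v))⁻¹ * 0))) := by
    simp only [gaussianPDFReal_def]
    refine Filter.Tendsto.const_mul _ (Filter.Tendsto.const_mul _ ?_)
    refine Real.tendsto_exp_atBot.comp ?_
    refine Filter.Tendsto.atBot_div_const (by positivity) ?_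
    refine Filter.tendsto_neg_atTop_atBot.comp ?_
    refine (Filter.tendsto_pow_atTop (by norm_num)).comp ?_
    exact Filter.tendsto_atTop_add_const_right _ (-μ) Filter.tendsto_id
  rw [integral_Ioi_of_hasDerivAt_of_tendsto' h2 (rlg_integrable_pdf μ v hv).integrableOn h5]
  ring

lemma rlg_meas_sign : Measurable Real.sign := by
  unfold Real.sign
  exact Measurable.ite measurableSet_Iio measurable_const
    (Measurable.ite measurableSet_Ioi measurable_const measurable_const)

lemma rlg_sign_bound (x : ℝ) : ‖Real.sign x‖ ≤ 1 := by
  rcases Real.sign_apply_eq x with h | h | h <;> rw [h] <;> simp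

/-- the sign of the shrunk mean -/
noncomputable def rlgG (ε m : ℝ) : ℝ := Real.sign (m - ε * Real.sign m)

lemma rlgG_meas (ε : ℝ) : Measurable (rlgG ε) := by
  unfold rlgG
  exact rlg_meas_sign.comp (measurable_id.sub (rlg_meas_sign.const_mul ε))

lemma rlgG_eq (ε : ℝ) (hε : 0 < ε) (x : ℝ) (h0 : x ≠ 0) (h1 : x ≠ ε) (h2 : x ≠ -ε) :
    rlgG ε x = 2 * (Set.Ioi ε).indicator (fun _ => (1 : ℝ)) x
      - 2 * (Set.Ioi 0).indicator (fun _ => (1 : ℝ)) x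
      + 2 * (Set.Ioi (-ε)).indicator (fun _ => (1 : ℝ)) x - 1 := by
  unfold rlgG
  simp only [Set.indicator, Set.mem_Ioi]
  rcases lt_or_gt_of_ne h0 with h | h
  · rw [Real.sign_of_neg h]
    rcases lt_or_gt_of_ne h2 with h' | h'
    · rw [Real.sign_of_neg (by linarith), if_neg (by linarith), if_neg (by linarith),
        if_neg (by linarith)]
      norm_num
    · rw [Real.sign_of_pos (by linarith), if_neg (by linarith), if_neg (by linarith),
        if_pos (by linarith)]
      norm_num
  · rw [Real.sign_of_pos h]
    rcases lt_or_gt_of_ne h1 with h' | h'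
    · rw [Real.sign_of_neg (by linarith), if_neg (by linarith), if_pos (by linarith),
        if_pos (by linarith)]
      norm_num
    · rw [Real.sign_of_pos (by linarith), if_pos (by linarith), if_pos (by linarith),
        if_pos (by linarith)]
      norm_num

lemma rlg_core (μ : ℝ) (v : NNReal) (hv : v ≠ 0) (ε : ℝ) (hε : 0 < ε) :
    ∫ x, rlgG ε x * (x - μ) ∂(gaussianReal μ v)
      = 2 * v * (gaussianPDFReal μ v ε - gaussianPDFReal μ v 0 + gaussianPDFReal μ v (-ε)) := by
  have : NullSingletonClass (gaussianReal μ v) := nullSingletonClass_gaussianReal hv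
  have hne : ∀ a : ℝ, ∀ᵐ x ∂(gaussianReal μ v), x ≠ a := fun a => by
    simp [ae_iff]
  have hi : Integrable (fun x : ℝ => x - μ) (gaussianReal μ v) :=
    (rlg_integrable μ v).sub (integrable_const μ)
  have hI : ∀ a : ℝ, Integrable
      (fun x : ℝ => (Set.Ioi a).indicator (fun _ => (1 : ℝ)) x * (x - μ)) (gaussianReal μ v) := by
    intro a
    refine hi.bdd_mul (c := 1)
      ((measurable_const.indicator measurableSet_Ioi).aestronglyMeasurable) (ae_of_all _ fun x => ?_)
    by_cases hx : x ∈ Set.Ioi a <;> simp [hx]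
  have heq : ∫ x, rlgG ε x * (x - μ) ∂(gaussianReal μ v) =
      ∫ x, (2 * ((Set.Ioi ε).indicator (fun _ => (1 : ℝ)) x * (x - μ))
      - 2 * ((Set.Ioi 0).indicator (fun _ => (1 : ℝ)) x * (x - μ))
      + 2 * ((Set.Ioi (-ε)).indicator (fun _ => (1 : ℝ)) x * (x - μ)) - (x - μ))
        ∂(gaussianReal μ v) := by
    refine integral_congr_ae ?_
    filter_upwards [hne 0, hne ε, hne (-ε)] with x h0 h1 h2
    rw [rlgG_eq ε hε x h0 h1 h2]
    ring
  have A := (hI ε).const_mul 2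
  have B := (hI 0).const_mul 2
  have C := (hI (-ε)).const_mul 2
  have AB : Integrable (fun x => 2 * ((Set.Ioi ε).indicator (fun _ => (1 : ℝ)) x * (x - μ))
      - 2 * ((Set.Ioi 0).indicator (fun _ => (1 : ℝ)) x * (x - μ))) (gaussianReal μ v) := A.sub B
  have AB2 : Integrable (fun x => 2 * ((Set.Ioi ε).indicator (fun _ => (1 : ℝ)) x * (x - μ))
      - 2 * ((Set.Ioi 0).indicator (fun _ => (1 : ℝ)) x * (x - μ))
      + 2 * ((Set.Ioi (-ε)).indicator (fun _ => (1 : ℝ)) x * (x - μ))) (gaussianReal μ v) :=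
    AB.add C
  rw [heq, integral_sub AB2 hi, integral_add AB C, integral_sub A B,
    integral_const_mul, integral_const_mul, integral_const_mul, rlg_tail μ v hv,
    rlg_tail μ v hv, rlg_tail μ v hv, integral_sub (rlg_integrable μ v) (integrable_const μ),
    integral_id_gaussianReal]
  simp
  ring

lemma rlg_sum_law {ι : Type*} [Fintype ι] [DecidableEq ι] (μ : ℝ) (v : NNReal) (s : Finset ι) :
    (Measure.pi fun _ : ι => gaussianReal μ v).map (∑ p ∈ s, fun ω : ι → ℝ => ω p)
      = gaussianReal (s.card * μ) (s.card * v) := by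
  have hind : iIndepFun (fun (p : ι) (ω : ι → ℝ) => ω p)
      (Measure.pi fun _ : ι => gaussianReal μ v) :=
    iIndepFun_pi (X := fun _ x => x) (fun _ => aemeasurable_id)
  induction s using Finset.induction_on with
  | empty =>
    simp only [Finset.sum_empty, Finset.card_empty, Nat.cast_zero, zero_mul, gaussianReal_zero_var]
    have := Measure.map_const (Measure.pi fun _ : ι => gaussianReal μ v) (0 : ℝ)
    rw [measure_univ, one_smul] at this
    exact this
  | insert a s ha ih =>
    rw [Finset.sum_insert ha, add_comm, Finset.card_insert_of_notMem ha]
    have h1 := hind.indepFun_finsetSum_of_notMem (fun i => measurable_pi_apply i) ha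
    have h2 := gaussianReal_add_gaussianReal_of_indepFun h1 ih
      (measurePreserving_eval (fun _ : ι => gaussianReal μ v) a).map_eq
    rw [h2]
    push_cast
    congr 1 <;> ring

/-- the sample mean of coordinate `j` -/
noncomputable def rlgM (n d : ℕ) (j : Fin d) (ω : Fin (n + 1) × Fin d → ℝ) : ℝ :=
  (∑ i : Fin n, ω (i.castSucc, j)) / n

/-- the training indices of coordinate `j` -/
def rlgS (n d : ℕ) (j : Fin d) : Finset (Fin (n + 1) × Fin d) :=
  (Finset.univ : Finset (Fin n)).map
    ⟨fun i => (i.castSucc, j), fun a b h => by simpa using h⟩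

lemma rlgM_eq (n d : ℕ) (j : Fin d) : rlgM n d j =
    (fun x : ℝ => x / n) ∘ (∑ p ∈ rlgS n d j, fun ω : Fin (n + 1) × Fin d → ℝ => ω p) := by
  ext ω
  simp [rlgM, rlgS, Finset.sum_apply]
  rfl

lemma rlgM_meas (n d : ℕ) (j : Fin d) : Measurable (rlgM n d j) := by
  unfold rlgM
  fun_prop

lemma rlgM_law (n d : ℕ) (hn : 0 < n) (j : Fin d) (μ : ℝ) (v : NNReal) :
    (Measure.pi fun _ : Fin (n + 1) × Fin d => gaussianReal μ v).map (rlgM n d j)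
      = gaussianReal μ (v / n) := by
  have hn' : (n : ℝ) ≠ 0 := by positivity
  rw [rlgM_eq, ← Measure.map_map (by fun_prop) (by fun_prop), rlg_sum_law,
    gaussianReal_map_div_const]
  simp only [rlgS, Finset.card_map, Finset.card_univ, Fintype.card_fin]
  congr 1
  · field_simp
  · ext
    simp
    field_simp

lemma rlgM_indep (n d : ℕ) (j : Fin d) (μ : ℝ) (v : NNReal) :
    IndepFun (rlgM n d j) (fun ω : Fin (n + 1) × Fin d → ℝ => ω (Fin.last n, j))
      (Measure.pi fun _ : Fin (n + 1) × Fin d => gaussianReal μ v) := by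
  have hind : iIndepFun (fun (p : Fin (n + 1) × Fin d) (ω : Fin (n + 1) × Fin d → ℝ) => ω p)
      (Measure.pi fun _ : Fin (n + 1) × Fin d => gaussianReal μ v) :=
    iIndepFun_pi (X := fun _ x => x) (fun _ => aemeasurable_id)
  have hnot : (Fin.last n, j) ∉ rlgS n d j := by
    simp only [rlgS, Finset.mem_map, Finset.mem_univ, true_and, not_exists]
    intro i h
    exact (Fin.castSucc_lt_last i).ne (congrArg Prod.fst h)
  have h1 := hind.indepFun_finsetSum_of_notMem (fun i => measurable_pi_apply i) hnot
  rw [rlgM_eq]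
  exact h1.comp (φ := fun x : ℝ => x / n) (ψ := fun x => x) (by fun_prop) measurable_id

lemma rlg_coord (n d : ℕ) (hn : 0 < n) (j : Fin d) (μ : ℝ) (v : NNReal) (hv : v ≠ 0) (γ ε : ℝ)
    (hε : 0 < ε) :
    Integrable (fun ω => (γ * rlgG ε (rlgM n d j ω)) * rlgM n d j ω)
      (Measure.pi fun _ : Fin (n + 1) × Fin d => gaussianReal μ v) ∧
    Integrable (fun ω => (γ * rlgG ε (rlgM n d j ω)) * ω (Fin.last n, j))
      (Measure.pi fun _ : Fin (n + 1) × Fin d => gaussianReal μ v) ∧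
    (∫ ω, (γ * rlgG ε (rlgM n d j ω)) * rlgM n d j ω
      ∂(Measure.pi fun _ : Fin (n + 1) × Fin d => gaussianReal μ v)) -
    (∫ ω, (γ * rlgG ε (rlgM n d j ω)) * ω (Fin.last n, j)
      ∂(Measure.pi fun _ : Fin (n + 1) × Fin d => gaussianReal μ v)) =
    γ * (2 * ((v / n : NNReal) : ℝ) * (gaussianPDFReal μ (v / n) ε - gaussianPDFReal μ (v / n) 0
      + gaussianPDFReal μ (v / n) (-ε))) := by
  set P := Measure.pi fun _ : Fin (n + 1) × Fin d => gaussianReal μ v with hP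
  have hvn : v / n ≠ 0 := div_ne_zero hv (by exact_mod_cast hn.ne')
  have hM := rlgM_meas n d j
  have hlaw : P.map (rlgM n d j) = gaussianReal μ (v / n) := rlgM_law n d hn j μ v
  have hev := measurePreserving_eval (fun _ : Fin (n + 1) × Fin d => gaussianReal μ v)
    (Fin.last n, j)
  have hGm : Measurable (fun ω => γ * rlgG ε (rlgM n d j ω)) :=
    ((rlgG_meas ε).comp hM).const_mul γ
  have hbd : ∀ ω, ‖γ * rlgG ε (rlgM n d j ω)‖ ≤ |γ| := by
    intro ω
    rw [norm_mul, Real.norm_eq_abs]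
    exact mul_le_of_le_one_right (abs_nonneg _) (rlg_sign_bound _)
  have hMi : Integrable (rlgM n d j) P := by
    have := rlg_integrable μ (v / n)
    rw [← hlaw] at this
    exact this.comp_measurable hM
  have hZi : Integrable (fun ω : Fin (n + 1) × Fin d → ℝ => ω (Fin.last n, j)) P :=
    hev.integrable_comp_of_integrable (rlg_integrable μ v)
  have hZ : ∫ ω, ω (Fin.last n, j) ∂P = μ := by
    have h := integral_map (μ := P) (measurable_pi_apply (Fin.last n, j)).aemeasurable
      (f := fun x : ℝ => x) aestronglyMeasurable_id
    rw [← h]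
    have h2 : P.map (fun ω => ω (Fin.last n, j)) = gaussianReal μ v := hev.map_eq
    rw [h2, integral_id_gaussianReal]
  have hGi : Integrable (fun ω => γ * rlgG ε (rlgM n d j ω)) P := by
    refine Integrable.of_bound hGm.aestronglyMeasurable |γ| (ae_of_all _ hbd)
  have I1 := hMi.bdd_mul (c := |γ|) hGm.aestronglyMeasurable (ae_of_all _ hbd)
  have I2 := hZi.bdd_mul (c := |γ|) hGm.aestronglyMeasurable (ae_of_all _ hbd)
  refine ⟨I1, I2, ?_⟩
  have hprod : ∫ ω, (γ * rlgG ε (rlgM n d j ω)) * ω (Fin.last n, j) ∂P =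
      (∫ ω, γ * rlgG ε (rlgM n d j ω) ∂P) * μ := by
    have := (rlgM_indep n d j μ v).integral_fun_comp_mul_comp
      (f := fun x => γ * rlgG ε x) (g := fun x : ℝ => x) hM.aemeasurable
      (measurable_pi_apply _).aemeasurable
      ((rlgG_meas ε).const_mul γ).aestronglyMeasurable aestronglyMeasurable_id
    rw [this, hZ]
  have hmm : Measurable (fun x : ℝ => rlgG ε x * (x - μ)) :=
    (rlgG_meas ε).mul (measurable_id.sub_const μ)
  rw [hprod, ← integral_mul_const, ← integral_sub I1 (hGi.mul_const μ), ← rlg_core μ _ hvn ε hε,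
    ← hlaw, integral_map hM.aemeasurable hmm.aestronglyMeasurable, ← integral_const_mul]
  congr 1
  ext ω
  ring

lemma rlg_const (n : ℕ) (hn : 0 < n) (μ σ : ℝ) (hσ : 0 < σ) (v : NNReal) (hv : (v : ℝ) = σ ^ 2)
    (x : ℝ) :
    2 * ((v / n : NNReal) : ℝ) * gaussianPDFReal μ (v / n) x
      = σ * Real.sqrt (2 / (n * Real.pi)) * Real.exp (-(n * (x - μ) ^ 2) / (2 * σ ^ 2)) := by
  have hn' : (0 : ℝ) < n := by exact_mod_cast hn
  have hpi := Real.pi_pos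
  rw [gaussianPDFReal_def]
  have h1 : ((v / n : NNReal) : ℝ) = σ ^ 2 / n := by simp [hv]
  simp only [h1]
  have h2 : -(x - μ) ^ 2 / (2 * (σ ^ 2 / n)) = -(n * (x - μ) ^ 2) / (2 * σ ^ 2) := by
    field_simp
  rw [h2]
  have h3 : 2 * (σ ^ 2 / n) * (√(2 * Real.pi * (σ ^ 2 / n)))⁻¹ = σ * √(2 / (n * Real.pi)) := by
    have hs : 0 < √(2 * Real.pi * (σ ^ 2 / n)) := Real.sqrt_pos.2 (by positivity)
    rw [mul_inv_eq_iff_eq_mul₀ hs.ne', mul_assoc, ← Real.sqrt_mul (by positivity)]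
    have : 2 / (n * Real.pi) * (2 * Real.pi * (σ ^ 2 / n)) = (2 * σ / n) ^ 2 := by
      field_simp
    rw [this, Real.sqrt_sq (by positivity)]
    ring
  rw [← h3]
  ring

/-- Loss gap of the robust model: with `(Z_{ij})` i.i.d. `N(μ, σ²)` for
`i ∈ {1,…,n+1}`, `j ∈ {1,…,d}`, `S_j = ∑_{i=1}^n Z_{ij}`,
`θ_j = γ·sign(S_j/n − ε·sign(S_j/n))` and test point `Z*_j = Z_{(n+1)j}`,
`E[⟨θ, S/n⟩ − ⟨θ, Z*⟩]
  = d·γ·σ·√(2/(nπ))·(exp(−n(ε+μ)²/(2σ²)) + exp(−n(ε−μ)²/(2σ²)) − exp(−nμ²/(2σ²)))`. -/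
theorem robust_loss_gap (n d : ℕ) (hn : 0 < n) (hd : 0 < d)
    (μ σ γ ε : ℝ) (hμ : 0 < μ) (hσ : 0 < σ) (hγ : 0 < γ) (hε : 0 < ε) :
    (∫ ω : Fin (n + 1) × Fin d → ℝ,
        ((∑ j : Fin d,
            (γ * Real.sign ((∑ i : Fin n, ω (i.castSucc, j)) / n -
                ε * Real.sign ((∑ i : Fin n, ω (i.castSucc, j)) / n))) *
              ((∑ i : Fin n, ω (i.castSucc, j)) / n)) -
          ∑ j : Fin d,
            (γ * Real.sign ((∑ i : Fin n, ω (i.castSucc, j)) / n -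
                ε * Real.sign ((∑ i : Fin n, ω (i.castSucc, j)) / n))) * ω (Fin.last n, j))
        ∂(Measure.pi fun _ : Fin (n + 1) × Fin d => gaussianReal μ ⟨σ ^ 2, sq_nonneg σ⟩))
      = d * γ * σ * Real.sqrt (2 / (n * Real.pi)) *
        (Real.exp (-(n * (ε + μ) ^ 2) / (2 * σ ^ 2)) +
          Real.exp (-(n * (ε - μ) ^ 2) / (2 * σ ^ 2)) -
          Real.exp (-(n * μ ^ 2) / (2 * σ ^ 2))) := by
  set v : NNReal := ⟨σ ^ 2, sq_nonneg σ⟩ with hvdef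
  have hvσ : (v : ℝ) = σ ^ 2 := rfl
  have hv : v ≠ 0 := by
    intro h
    rw [h] at hvσ
    have : 0 < σ ^ 2 := by positivity
    rw [← hvσ] at this
    simp at this
  have key := fun j : Fin d => rlg_coord n d hn j μ v hv γ ε hε
  change (∫ ω : Fin (n + 1) × Fin d → ℝ,
      ((∑ j : Fin d, (γ * rlgG ε (rlgM n d j ω)) * rlgM n d j ω) -
        ∑ j : Fin d, (γ * rlgG ε (rlgM n d j ω)) * ω (Fin.last n, j))
      ∂(Measure.pi fun _ : Fin (n + 1) × Fin d => gaussianReal μ v)) = _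
  rw [integral_sub (integrable_finsetSum _ fun j _ => (key j).1)
    (integrable_finsetSum _ fun j _ => (key j).2.1),
    integral_finsetSum _ (fun j _ => (key j).1),
    integral_finsetSum _ (fun j _ => (key j).2.1), ← Finset.sum_sub_distrib,
    Finset.sum_congr rfl (fun j _ => (key j).2.2)]
  rw [Finset.sum_const, Finset.card_univ, Fintype.card_fin, nsmul_eq_mul, mul_add, mul_sub,
    rlg_const n hn μ σ hσ v hvσ, rlg_const n hn μ σ hσ v hvσ, rlg_const n hn μ σ hσ v hvσ]
  rw [show (-ε - μ) ^ 2 = (ε + μ) ^ 2 by ring, show (0 - μ) ^ 2 = μ ^ 2 by ring]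
  ring
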